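/- Let p(z) = p_0 + p_1 z + ⋯ + p_n z^n be a self-conjugate polynomial of degree n with complex coefficients (p_n ≠ 0) such that p(−i) ≠ 0, and define T(z) = ∑_{k=0}^{n} p_k (−i)^k (z + 1)^k (z − 1)^{n−k}, so that T(z) = (z − 1)^n p(W(z)) where W(z) = −i(z + 1)/(z − 1). Then T is a self-inversive polynomial of degree n, i.e., the multiset of complex zeros of T, counted with multiplicity, is invariant under the map ζ ↦ 1/conj(ζ). -/

import Mathlib

open Polynomial Complex

/-- The homogenization of a split polynomial `p`, evaluated at a pair `(a, b)` of field elements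
with `b ≠ 0`, is the product of the corresponding homogenized linear factors. -/
lemma sum_coeff_mul_pow_eq_prod_roots {K : Type*} [Field K] {p : K[X]} (hp : p.Splits)
    (a : K) {b : K} (hb : b ≠ 0) :
    ∑ k ∈ Finset.range (p.natDegree + 1), p.coeff k * a ^ k * b ^ (p.natDegree - k) =
      p.leadingCoeff * (p.roots.map fun w => a - w * b).prod := by
  have hsum : ∑ k ∈ Finset.range (p.natDegree + 1), p.coeff k * a ^ k * b ^ (p.natDegree - k) =
      b ^ p.natDegree * p.eval (a / b) := by
    rw [eval_eq_sum_range, Finset.mul_sum]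
    refine Finset.sum_congr rfl fun k hk => ?_
    have hk' : k ≤ p.natDegree := Nat.lt_succ_iff.mp (Finset.mem_range.mp hk)
    rw [pow_sub₀ b hb hk', div_pow]
    ring
  have hprod : (p.roots.map fun w => a - w * b).prod =
      b ^ p.natDegree * (p.roots.map fun w => a / b - w).prod := by
    rw [hp.natDegree_eq_card_roots, ← Multiset.prod_replicate, ← Multiset.map_const',
      ← Multiset.prod_map_mul]
    congr 1
    refine Multiset.map_congr rfl fun w _ => ?_
    field_simp
  have heval : p.eval (a / b) = p.leadingCoeff * (p.roots.map fun w => a / b - w).prod := by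
    conv_lhs => rw [hp.eq_prod_roots]
    simp [eval_multiset_prod]
  rw [hsum, hprod, heval]
  ring

/-- The polynomial `(X - 1) ^ n * p (-i (X + 1) / (X - 1))`, `n = natDegree p`, factors over the
images of the roots of `p` under the Cayley transform `w ↦ (w - i) / (w + i)`. -/
lemma exists_cayley_factorization {p : ℂ[X]} (hmi : p.eval (-I) ≠ 0) :
    ∃ c : ℂ, c ≠ 0 ∧
      ∑ k ∈ Finset.range (p.natDegree + 1),
        C (p.coeff k * (-I) ^ k) * (X + C 1) ^ k * (X - C 1) ^ (p.natDegree - k) =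
      C c * ((p.roots.map fun w => (w - I) / (w + I)).map fun z => X - C z).prod := by
  have hp : p ≠ 0 := by
    rintro rfl
    simp at hmi
  have hne : ∀ w ∈ p.roots, w + I ≠ 0 := by
    intro w hw h
    rw [eq_neg_of_add_eq_zero_left h] at hw
    exact hmi (isRoot_of_mem_roots hw)
  refine ⟨p.leadingCoeff * (p.roots.map fun w => -(w + I)).prod,
    mul_ne_zero (leadingCoeff_ne_zero.mpr hp) ?_, ?_⟩
  · rw [Ne, Multiset.prod_eq_zero_iff, Multiset.mem_map]
    rintro ⟨w, hw, h⟩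
    exact hne w hw (neg_eq_zero.mp h)
  · refine eq_of_infinite_eval_eq _ _
      ((Set.finite_singleton (1 : ℂ)).infinite_compl.mono fun z hz => ?_)
    have hz1 : z - 1 ≠ 0 := sub_ne_zero.mpr hz
    have h := sum_coeff_mul_pow_eq_prod_roots (IsAlgClosed.splits p) (-I * (z + 1)) hz1
    have hprod : (p.roots.map fun w => -I * (z + 1) - w * (z - 1)).prod =
        (p.roots.map fun w => -(w + I)).prod *
          (p.roots.map fun w => z - (w - I) / (w + I)).prod := by
      rw [← Multiset.prod_map_mul]
      congr 1
      refine Multiset.map_congr rfl fun w hw => ?_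
      have := hne w hw
      field_simp
      ring
    rw [hprod, ← mul_assoc] at h
    simp only [Set.mem_ofPred_eq, eval_finsetSum, eval_mul, eval_C, eval_pow, eval_add, eval_sub,
      eval_X, eval_multiset_prod, Multiset.map_map, Function.comp_def]
    rw [← h]
    refine Finset.sum_congr rfl fun k _ => ?_
    rw [mul_pow]
    ring

/-- The Möbius transformation `T(z) = (z-1)^n p(W(z))`, `W(z) = -i(z+1)/(z-1)`,
maps a self-conjugate polynomial `p` of degree `n` with `p(-i) ≠ 0` to a
self-inversive polynomial `T` of degree `n`. -/
theorem mobius_maps_sc_to_si (p : Polynomial ℂ) (n : ℕ)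
    (hdeg : p.natDegree = n) (hn : p.coeff n ≠ 0) (hmi : p.eval (-Complex.I) ≠ 0)
    (hSC : p.roots.map (starRingEnd ℂ) = p.roots)
    (T : Polynomial ℂ)
    (hT : T = ∑ k ∈ Finset.range (n + 1),
      Polynomial.C (p.coeff k * (-Complex.I) ^ k) *
        (Polynomial.X + Polynomial.C 1) ^ k *
        (Polynomial.X - Polynomial.C 1) ^ (n - k)) :
    T.natDegree = n ∧ T.roots.map (fun z => ((starRingEnd ℂ) z)⁻¹) = T.roots := by
  subst hdeg
  obtain ⟨c, hc, hfac⟩ := exists_cayley_factorization hmi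
  rw [hfac] at hT
  have hroots : T.roots = p.roots.map fun w => (w - I) / (w + I) := by
    rw [hT, roots_C_mul _ hc, roots_multiset_prod_X_sub_C]
  constructor
  · rw [(IsAlgClosed.splits T).natDegree_eq_card_roots, hroots, Multiset.card_map,
      (IsAlgClosed.splits p).natDegree_eq_card_roots]
  · rw [hroots]
    conv_rhs => rw [← hSC]
    simp only [Multiset.map_map]
    refine Multiset.map_congr rfl fun w _ => ?_
    simp [sub_eq_add_neg]
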